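/- arXiv:2307.13299 — 9 statements merged into one kernel-verified Lean document; each statement's English description precedes it below -/
import Mathlib

section
/- For every strategy Z, the restriction map sending a path s to its tuple of chance-node states (s_k)_{k∈C} is a bijection from S(Z) onto ∏_{k∈C} S_k; in particular, the number of paths compatible with Z is |S(Z)| = ∏_{k∈C} |S_k|. -/
/-!
STATEMENT 1: For every strategy Z, the restriction map sending a path s to its tuple
of chance-node states (s_k)_{k∈C} is a bijection from S(Z) onto ∏_{k∈C} S_k;
in particular, |S(Z)| = ∏_{k∈C} |S_k|.
-/

open Finset

attribute [local instance] Classical.propDecidable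

/-- Restriction of a path `s` to the information set `I j` of node `j`. -/
def restrict {n : ℕ} {S : Fin n → Type} (I : Fin n → Finset (Fin n))
    (s : ∀ j, S j) (j : Fin n) : ∀ i : (I j), S i.1 :=
  fun i => s i.1

theorem compatible_paths_bijection {n : ℕ}
    (S : Fin n → Type) [∀ j, Fintype (S j)] [∀ j, Nonempty (S j)]
    (C D : Finset (Fin n)) (hCD : Disjoint C D) (hCDunion : C ∪ D = Finset.univ)
    (I : Fin n → Finset (Fin n)) (hI : ∀ j, ∀ i ∈ I j, i < j)
    (Z : ∀ j : Fin n, (∀ i : (I j), S i.1) → S j) :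
    Function.Bijective
      (fun (s : {s : ∀ j, S j // ∀ j ∈ D, Z j (restrict I s j) = s j}) (k : C) =>
        s.1 k.1)
    ∧ (Finset.univ.filter
        (fun s : ∀ j, S j => ∀ j ∈ D, Z j (restrict I s j) = s j)).card
      = ∏ k ∈ C, Fintype.card (S k) := by
  have hbij : Function.Bijective
      (fun (s : {s : ∀ j, S j // ∀ j ∈ D, Z j (restrict I s j) = s j}) (k : C) =>
        s.1 k.1) := by
    constructor
    · rintro ⟨s, hs⟩ ⟨t, ht⟩ hst
      apply Subtype.ext
      funext j
      induction j using WellFoundedLT.induction with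
      | ind j ih =>
        have hj : j ∈ C ∪ D := hCDunion ▸ Finset.mem_univ j
        rcases Finset.mem_union.1 hj with hj | hj
        · exact congrFun hst ⟨j, hj⟩
        · have h : restrict I s j = restrict I t j := by
            funext i
            exact ih i.1 (hI j i.1 i.2)
          change s j = t j
          rw [← hs j hj, ← ht j hj, h]
    · intro c
      let F : ∀ j : Fin n, (∀ i : Fin n, i < j → S i) → S j := fun j r =>
        if h : j ∈ C then c ⟨j, h⟩ else Z j (fun i => r i.1 (hI j i.1 i.2))
      let wf : WellFounded (fun a b : Fin n => a < b) := wellFounded_lt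
      let s : ∀ j, S j := fun j => wf.fix F j
      have key : ∀ j, s j = F j (fun i _ => s i) := fun j => wf.fix_eq F j
      refine ⟨⟨s, fun j hj => ?_⟩, ?_⟩
      · have hn : j ∉ C := fun h => Finset.disjoint_left.1 hCD h hj
        rw [key j]
        simp only [F, dif_neg hn]
        rfl
      · funext k
        change s k.1 = c k
        rw [key k.1]
        simp only [F, dif_pos k.2]
  refine ⟨hbij, ?_⟩
  have h := Fintype.card_of_bijective hbij
  rw [Fintype.card_subtype, Fintype.card_pi] at h
  rw [← Finset.prod_coe_sort C (fun k => Fintype.card (S k))]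
  convert h
end

section
/- Validity of the locally-compatible-paths inequality: for every strategy Z, every decision node j ∈ D, every s_j ∈ S_j and every s_{I(j)} ∈ S_{I(j)}, one has ∑_{s ∈ S_{s_j|s_{I(j)}} ∩ S(Z)} p(s) ≤ z(s_j | s_{I(j)}); in particular, the sum equals 0 whenever Z_j(s_{I(j)}) ≠ s_j. -/
/-!
STATEMENT 2: Validity of the locally-compatible-paths inequality: for every strategy Z,
every decision node j ∈ D, every s_j ∈ S_j and every s_{I(j)} ∈ S_{I(j)},
∑_{s ∈ S_{s_j|s_{I(j)}} ∩ S(Z)} p(s) ≤ z(s_j | s_{I(j)});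
in particular, the sum equals 0 whenever Z_j(s_{I(j)}) ≠ s_j.
-/

open Finset

attribute [local instance] Classical.propDecidable

/-- The path probability `p(s) = ∏_{j ∈ C} P(s_j | s_{I(j)})`. -/
def pathProb {n : ℕ} {S : Fin n → Type} (C : Finset (Fin n))
    (I : Fin n → Finset (Fin n))
    (P : ∀ j : Fin n, (∀ i : (I j), S i.1) → S j → ℝ)
    (s : ∀ j, S j) : ℝ :=
  ∏ j ∈ C, P j (restrict I s j) (s j)

theorem sum_prod_kernel_eq_one : ∀ {n : ℕ} (S : Fin n → Type) [∀ j, Fintype (S j)]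
    [∀ j, Nonempty (S j)] (f : Fin n → (∀ k, S k) → ℝ)
    (_ : ∀ k s t, (∀ i ≤ k, s i = t i) → f k s = f k t)
    (_ : ∀ k s, ∑ x : S k, f k (Function.update s k x) = 1),
    ∑ s : (∀ k, S k), ∏ k, f k s = 1 := by
  intro n
  induction n with
  | zero => intro S _ _ f _ _; simp
  | succ n ih =>
    intro S _ _ f hdep hsum
    have x0 : S (Fin.last n) := Classical.arbitrary _
    have key := ih (fun k => S k.castSucc) (fun k s => f k.castSucc (Fin.snoc s x0)) (by
      intro k s t h
      apply hdep
      intro i hi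
      induction i using Fin.lastCases with
      | last => simp
      | cast i => simpa using h i (by simpa using hi)) (by
      intro k s
      rw [← hsum k.castSucc (Fin.snoc s x0)]
      refine Finset.sum_congr rfl fun x _ => ?_
      rw [← Fin.snoc_update])
    rw [← (Fin.snocEquiv S).sum_comp, Fintype.sum_prod_type_right, ← key]
    refine Finset.sum_congr rfl fun s _ => ?_
    have h1 : ∀ x : S (Fin.last n), ∏ k, f k (Fin.snocEquiv S (x, s)) =
        (∏ k : Fin n, f k.castSucc (Fin.snoc s x0)) *
          f (Fin.last n) (Function.update (Fin.snoc s x0) (Fin.last n) x) := by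
      intro x
      rw [Fin.prod_univ_castSucc]
      congr 1
      · refine Finset.prod_congr rfl fun k _ => ?_
        apply hdep
        intro i hi
        induction i using Fin.lastCases with
        | last => exact absurd hi (by simp [Fin.le_def])
        | cast i => simp [Fin.snocEquiv]
      · rw [Fin.update_snoc_last]; rfl
    rw [Finset.sum_congr rfl fun x _ => h1 x, ← Finset.mul_sum, hsum, mul_one]

theorem locally_compatible_paths_inequality_valid {n : ℕ}
    (S : Fin n → Type) [∀ j, Fintype (S j)] [∀ j, Nonempty (S j)]
    (C D : Finset (Fin n)) (hCD : Disjoint C D) (hCDunion : C ∪ D = Finset.univ)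
    (I : Fin n → Finset (Fin n)) (hI : ∀ j, ∀ i ∈ I j, i < j)
    (P : ∀ j : Fin n, (∀ i : (I j), S i.1) → S j → ℝ)
    (hPnonneg : ∀ j ∈ C, ∀ (sI : ∀ i : (I j), S i.1) (sj : S j), 0 ≤ P j sI sj)
    (hPsum : ∀ j ∈ C, ∀ sI : ∀ i : (I j), S i.1, ∑ sj : S j, P j sI sj = 1)
    (Z : ∀ j : Fin n, (∀ i : (I j), S i.1) → S j)
    (j : Fin n) (hj : j ∈ D) (sj : S j) (sI : ∀ i : (I j), S i.1) :
    (∑ s ∈ Finset.univ.filter (fun s : ∀ k, S k =>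
        (s j = sj ∧ restrict I s j = sI) ∧ ∀ k ∈ D, Z k (restrict I s k) = s k),
      pathProb C I P s) ≤ (if Z j sI = sj then (1 : ℝ) else 0)
    ∧ (Z j sI ≠ sj →
        (∑ s ∈ Finset.univ.filter (fun s : ∀ k, S k =>
            (s j = sj ∧ restrict I s j = sI) ∧ ∀ k ∈ D, Z k (restrict I s k) = s k),
          pathProb C I P s) = 0) := by
  have hzero : Z j sI ≠ sj →
        (∑ s ∈ Finset.univ.filter (fun s : ∀ k, S k =>
            (s j = sj ∧ restrict I s j = sI) ∧ ∀ k ∈ D, Z k (restrict I s k) = s k),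
          pathProb C I P s) = 0 := by
    intro h
    apply Finset.sum_eq_zero
    intro s hs
    obtain ⟨⟨h1, h2⟩, h3⟩ := (Finset.mem_filter.1 hs).2
    exact absurd (by rw [← h2, h3 j hj, h1]) h
  refine ⟨?_, hzero⟩
  split_ifs with hz
  swap
  · exact (hzero hz).le
  let f : Fin n → (∀ k, S k) → ℝ := fun k s =>
    if k ∈ C then P k (restrict I s k) (s k) else if Z k (restrict I s k) = s k then 1 else 0
  have hf0 : ∀ k s, 0 ≤ f k s := by
    intro k s
    simp only [f]
    split_ifs with h
    · exact hPnonneg k h _ _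
    · exact zero_le_one
    · exact le_rfl
  have hone : ∑ s : (∀ k, S k), ∏ k, f k s = 1 := by
    apply sum_prod_kernel_eq_one
    · intro k s t h
      have hr : restrict I s k = restrict I t k := by
        funext i
        exact h i.1 (hI k i.1 i.2).le
      simp only [f, hr, h k le_rfl]
    · intro k s
      have hr : ∀ x, restrict I (Function.update s k x) k = restrict I s k := by
        intro x
        funext i
        exact Function.update_of_ne (hI k i.1 i.2).ne _ _
      simp only [f, hr, Function.update_self]
      by_cases h : k ∈ C
      · simpa [h] using hPsum k h _
      · simp [h]
  rw [← hone]
  calc _ = ∑ s ∈ Finset.univ.filter (fun s : ∀ k, S k =>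
            (s j = sj ∧ restrict I s j = sI) ∧ ∀ k ∈ D, Z k (restrict I s k) = s k),
          ∏ k, f k s := by
        refine Finset.sum_congr rfl fun s hs => ?_
        have h3 := (Finset.mem_filter.1 hs).2.2
        rw [← hCDunion, Finset.prod_union hCD]
        have hD : ∏ k ∈ D, f k s = 1 := by
          refine Finset.prod_eq_one fun k hk => ?_
          have : k ∉ C := fun hc => Finset.disjoint_left.1 hCD hc hk
          simp [f, this, h3 k hk]
        rw [hD, mul_one]
        refine Finset.prod_congr rfl fun k hk => ?_
        simp [f, hk]
    _ ≤ _ := Finset.sum_le_sum_of_subset_of_nonneg (Finset.filter_subset _ _)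
        fun s _ _ => Finset.prod_nonneg fun k _ => hf0 k s
end

section
/- Bound on locally compatible active paths: for every strategy Z, every decision node j ∈ D, every s_j ∈ S_j and every s_{I(j)} ∈ S_{I(j)}, the number of paths that are compatible with Z and have the states at node j and at the nodes of I(j) fixed satisfies |S_{s_j|s_{I(j)}} ∩ S(Z)| ≤ ∏_{k ∈ C \ ({j} ∪ I(j))} |S_k|, which equals |S_{s_j|s_{I(j)}}| / ∏_{k ∈ D \ ({j} ∪ I(j))} |S_k|. -/
/-!
STATEMENT 4: Bound on locally compatible active paths: for every strategy Z, every
decision node j ∈ D, every s_j ∈ S_j and every s_{I(j)} ∈ S_{I(j)},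
|S_{s_j|s_{I(j)}} ∩ S(Z)| ≤ ∏_{k ∈ C \ ({j} ∪ I(j))} |S_k|,
which equals |S_{s_j|s_{I(j)}}| / ∏_{k ∈ D \ ({j} ∪ I(j))} |S_k|.
-/

open Finset

attribute [local instance] Classical.propDecidable

theorem locally_compatible_active_paths_bound {n : ℕ}
    (S : Fin n → Type) [∀ j, Fintype (S j)] [∀ j, Nonempty (S j)]
    (C D : Finset (Fin n)) (hCD : Disjoint C D) (hCDunion : C ∪ D = Finset.univ)
    (I : Fin n → Finset (Fin n)) (hI : ∀ j, ∀ i ∈ I j, i < j)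
    (Z : ∀ j : Fin n, (∀ i : (I j), S i.1) → S j)
    (j : Fin n) (hj : j ∈ D) (sj : S j) (sI : ∀ i : (I j), S i.1) :
    (Finset.univ.filter (fun s : ∀ k, S k =>
        (s j = sj ∧ restrict I s j = sI) ∧ ∀ k ∈ D, Z k (restrict I s k) = s k)).card
      ≤ ∏ k ∈ C \ insert j (I j), Fintype.card (S k)
    ∧ ∏ k ∈ C \ insert j (I j), Fintype.card (S k)
      = (Finset.univ.filter
          (fun s : ∀ k, S k => s j = sj ∧ restrict I s j = sI)).card
        / ∏ k ∈ D \ insert j (I j), Fintype.card (S k) := by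
  have hjI : j ∉ I j := fun h => lt_irrefl _ (hI j j h)
  obtain ⟨s0, h0j, h0I⟩ : ∃ s0 : ∀ k, S k, s0 j = sj ∧ restrict I s0 j = sI := by
    refine ⟨Function.update (fun k => if h : k ∈ I j then sI ⟨k, h⟩ else
      Classical.arbitrary (S k)) j sj, by simp, ?_⟩
    funext i
    have hne : i.1 ≠ j := by
      intro h
      have h2 := i.2
      rw [h] at h2
      exact hjI h2
    simp [_root_.restrict, Function.update_of_ne hne]
  subst h0j
  subst h0I
  constructor
  · have hc : Fintype.card (∀ k : {k // k ∈ C \ insert j (I j)}, S k.1)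
        = ∏ k ∈ C \ insert j (I j), Fintype.card (S k) := by
      rw [Fintype.card_pi]
      exact Finset.prod_coe_sort (C \ insert j (I j)) (fun k => Fintype.card (S k))
    rw [← hc, ← Finset.card_univ]
    apply Finset.card_le_card_of_injOn
      (fun s => (fun k : {k // k ∈ C \ insert j (I j)} => s k.1))
    · intro s _
      simp
    · intro s hs t ht hst
      simp only [Finset.coe_filter, Finset.mem_univ, true_and, Set.mem_ofPred_eq] at hs ht
      obtain ⟨⟨hs1, hs2⟩, hs3⟩ := hs
      obtain ⟨⟨ht1, ht2⟩, ht3⟩ := ht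
      funext k
      induction k using WellFoundedLT.induction with
      | _ k ih =>
      by_cases hkD : k ∈ D
      · rw [← hs3 k hkD, ← ht3 k hkD]
        congr 1
        funext i
        exact ih i.1 (hI k i.1 i.2)
      · have hkC : k ∈ C := by
          have := Finset.mem_univ k
          rw [← hCDunion, Finset.mem_union] at this
          tauto
        by_cases hk : k ∈ insert j (I j)
        · rcases Finset.mem_insert.1 hk with h | h
          · subst h
            rw [hs1, ht1]
          · exact congrFun (hs2.trans ht2.symm) ⟨k, h⟩
        · exact congrFun hst ⟨k, Finset.mem_sdiff.2 ⟨hkC, hk⟩⟩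
  · have hf : (Finset.univ.filter
          (fun s : ∀ k, S k => s j = s0 j ∧ restrict I s j = restrict I s0 j))
        = Fintype.piFinset (fun k => if k ∈ insert j (I j) then {s0 k} else Finset.univ) := by
      ext s
      simp only [Finset.mem_filter, Finset.mem_univ, true_and, Fintype.mem_piFinset]
      constructor
      · rintro ⟨h1, h2⟩ k
        split_ifs with hk
        · rw [Finset.mem_singleton]
          rcases Finset.mem_insert.1 hk with h | h
          · subst h
            exact h1
          · exact congrFun h2 ⟨k, h⟩
        · exact Finset.mem_univ _
      · intro h
        have h' : ∀ k ∈ insert j (I j), s k = s0 k := by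
          intro k hk
          have := h k
          rw [if_pos hk, Finset.mem_singleton] at this
          exact this
        exact ⟨h' j (Finset.mem_insert_self _ _),
          funext fun i => h' i.1 (Finset.mem_insert_of_mem i.2)⟩
    have hp : ∀ A : Finset (Fin n), ∏ k ∈ A, (if k ∈ insert j (I j) then ({s0 k} : Finset (S k))
        else Finset.univ).card = ∏ k ∈ A \ insert j (I j), Fintype.card (S k) := by
      intro A
      symm
      have : ∀ k ∈ A \ insert j (I j), Fintype.card (S k) =
          (if k ∈ insert j (I j) then ({s0 k} : Finset (S k)) else Finset.univ).card := by
        intro k hk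
        rw [if_neg (Finset.mem_sdiff.1 hk).2, Finset.card_univ]
      rw [Finset.prod_congr rfl this]
      apply Finset.prod_subset Finset.sdiff_subset
      intro k hk hk'
      have : k ∈ insert j (I j) := by
        by_contra h
        exact hk' (Finset.mem_sdiff.2 ⟨hk, h⟩)
      rw [if_pos this, Finset.card_singleton]
    have hpos : 0 < ∏ k ∈ D \ insert j (I j), Fintype.card (S k) :=
      Finset.prod_pos fun k _ => Fintype.card_pos
    rw [hf, Fintype.card_piFinset, ← hCDunion, Finset.prod_union hCD, hp, hp,
      Nat.mul_div_cancel _ hpos]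
end

section
/- Validity of the strengthened Γ-inequality: let S* ⊆ S be any subset of paths (the effective paths after removing forbidden paths) and write S*_{s_j|s_{I(j)}} = S* ∩ S_{s_j|s_{I(j)}}. For every strategy Z, every decision node j ∈ D, every s_j ∈ S_j and every s_{I(j)} ∈ S_{I(j)}, the number of paths in S*_{s_j|s_{I(j)}} compatible with Z satisfies |S*_{s_j|s_{I(j)}} ∩ S(Z)| ≤ Γ(s_j|s_{I(j)}) · z(s_j | s_{I(j)}), where Γ(s_j|s_{I(j)}) = min{ |S*_{s_j|s_{I(j)}}|, ∏_{k ∈ C \ ({j} ∪ I(j))} |S_k| }. -/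
/-!
STATEMENT 6: Validity of the strengthened Γ-inequality: let S* ⊆ S be any subset of
paths and write S*_{s_j|s_{I(j)}} = S* ∩ S_{s_j|s_{I(j)}}. For every strategy Z, every
decision node j ∈ D, every s_j ∈ S_j and every s_{I(j)} ∈ S_{I(j)},
|S*_{s_j|s_{I(j)}} ∩ S(Z)| ≤ Γ(s_j|s_{I(j)}) · z(s_j | s_{I(j)}), where
Γ(s_j|s_{I(j)}) = min{ |S*_{s_j|s_{I(j)}}|, ∏_{k ∈ C \ ({j} ∪ I(j))} |S_k| }.
-/

open Finset

attribute [local instance] Classical.propDecidable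

theorem gamma_inequality_valid {n : ℕ}
    (S : Fin n → Type) [∀ j, Fintype (S j)] [∀ j, Nonempty (S j)]
    (C D : Finset (Fin n)) (hCD : Disjoint C D) (hCDunion : C ∪ D = Finset.univ)
    (I : Fin n → Finset (Fin n)) (hI : ∀ j, ∀ i ∈ I j, i < j)
    (Sstar : Finset (∀ j, S j))
    (Z : ∀ j : Fin n, (∀ i : (I j), S i.1) → S j)
    (j : Fin n) (hj : j ∈ D) (sj : S j) (sI : ∀ i : (I j), S i.1) :
    (Sstar.filter (fun s : ∀ k, S k =>
        (s j = sj ∧ restrict I s j = sI) ∧ ∀ k ∈ D, Z k (restrict I s k) = s k)).card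
      ≤ min
          (Sstar.filter
            (fun s : ∀ k, S k => s j = sj ∧ restrict I s j = sI)).card
          (∏ k ∈ C \ insert j (I j), Fintype.card (S k))
        * (if Z j sI = sj then 1 else 0) := by
  split_ifs with hz
  · rw [mul_one]
    refine le_min ?_ ?_
    · apply Finset.card_le_card
      intro s hs
      rw [Finset.mem_filter] at hs ⊢
      exact ⟨hs.1, hs.2.1⟩
    · have hcard : (∏ k ∈ C \ insert j (I j), Fintype.card (S k))
          = (Finset.univ : Finset (∀ k : ↥(C \ insert j (I j)), S k.1)).card := by
        rw [Finset.card_univ, Fintype.card_pi]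
        exact (Finset.prod_coe_sort (C \ insert j (I j)) (fun k => Fintype.card (S k))).symm
      rw [hcard]
      refine Finset.card_le_card_of_injOn (fun s k => s k.1) (fun _ _ => Finset.mem_univ _) ?_
      intro s hs t ht hst
      rw [Finset.mem_coe, Finset.mem_filter] at hs ht
      obtain ⟨-, ⟨hsj, hsI⟩, hsZ⟩ := hs
      obtain ⟨-, ⟨htj, htI⟩, htZ⟩ := ht
      have key : ∀ m : ℕ, ∀ k : Fin n, k.1 = m → s k = t k := by
        intro m
        induction m using Nat.strong_induction_on with
        | _ m ih =>
          intro k hk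
          by_cases hkD : k ∈ D
          · rw [← hsZ k hkD, ← htZ k hkD]
            congr 1
            funext i
            have hlt := hI k i.1 i.2
            exact ih i.1.1 (by rw [← hk]; exact hlt) i.1 rfl
          · have hkC : k ∈ C := by
              have h : k ∈ C ∪ D := by rw [hCDunion]; exact Finset.mem_univ k
              exact (Finset.mem_union.1 h).resolve_right hkD
            by_cases hkI : k ∈ I j
            · exact congrFun (hsI.trans htI.symm) ⟨k, hkI⟩
            · have hkj : k ≠ j := by
                rintro rfl
                exact hkD hj
              have hmem : k ∈ C \ insert j (I j) := by
                rw [Finset.mem_sdiff, Finset.mem_insert]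
                exact ⟨hkC, by tauto⟩
              exact congrFun hst ⟨k, hmem⟩
      funext k
      exact key k.1 k rfl
  · rw [mul_zero, Nat.le_zero, Finset.card_eq_zero, Finset.filter_eq_empty_iff]
    rintro s - ⟨⟨h1, h2⟩, h3⟩
    apply hz
    rw [← h2, ← h1]
    exact h3 j hj
end

section
/- Characterization of the feasible conditional path probabilities in the original formulation: fix a strategy Z with induced binary variables z. A function π : S → ℝ satisfies (i) 0 ≤ π(s) ≤ p(s) for all s ∈ S, (ii) π(s) ≤ z(s_j | s_{I(j)}) for all j ∈ D and all s ∈ S, and (iii) π(s) ≥ p(s) + ∑_{j∈D} z(s_j | s_{I(j)}) − |D| for all s ∈ S, if and only if π(s) = p(s) for every path s compatible with Z and π(s) = 0 for every path s not compatible with Z. -/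
/-!
STATEMENT 7: Characterization of the feasible conditional path probabilities in the
original formulation: fix a strategy Z with induced binary variables z.
A function π : S → ℝ satisfies
(i) 0 ≤ π(s) ≤ p(s) for all s ∈ S,
(ii) π(s) ≤ z(s_j | s_{I(j)}) for all j ∈ D and all s ∈ S, and
(iii) π(s) ≥ p(s) + ∑_{j∈D} z(s_j | s_{I(j)}) − |D| for all s ∈ S,
if and only if π(s) = p(s) for every path s compatible with Z and π(s) = 0 for every
path s not compatible with Z.
-/

open Finset

attribute [local instance] Classical.propDecidable

theorem pi_characterization {n : ℕ}
    (S : Fin n → Type) [∀ j, Fintype (S j)] [∀ j, Nonempty (S j)]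
    (C D : Finset (Fin n)) (hCD : Disjoint C D) (hCDunion : C ∪ D = Finset.univ)
    (I : Fin n → Finset (Fin n)) (hI : ∀ j, ∀ i ∈ I j, i < j)
    (P : ∀ j : Fin n, (∀ i : (I j), S i.1) → S j → ℝ)
    (hPnonneg : ∀ j ∈ C, ∀ (sI : ∀ i : (I j), S i.1) (sj : S j), 0 ≤ P j sI sj)
    (hPsum : ∀ j ∈ C, ∀ sI : ∀ i : (I j), S i.1, ∑ sj : S j, P j sI sj = 1)
    (Z : ∀ j : Fin n, (∀ i : (I j), S i.1) → S j)
    (π : (∀ j, S j) → ℝ) :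
    ((∀ s : ∀ j, S j, 0 ≤ π s ∧ π s ≤ pathProb C I P s) ∧
     (∀ j ∈ D, ∀ s : ∀ j, S j,
        π s ≤ if Z j (restrict I s j) = s j then (1 : ℝ) else 0) ∧
     (∀ s : ∀ j, S j,
        π s ≥ pathProb C I P s
          + (∑ j ∈ D, if Z j (restrict I s j) = s j then (1 : ℝ) else 0)
          - (D.card : ℝ)))
    ↔ (∀ s : ∀ j, S j,
        ((∀ j ∈ D, Z j (restrict I s j) = s j) → π s = pathProb C I P s) ∧
        (¬ (∀ j ∈ D, Z j (restrict I s j) = s j) → π s = 0)) := by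
  have hp0 : ∀ s : ∀ j, S j, 0 ≤ pathProb C I P s := fun s =>
    Finset.prod_nonneg fun j hj => hPnonneg j hj _ _
  have hp1 : ∀ s : ∀ j, S j, pathProb C I P s ≤ 1 := fun s =>
    Finset.prod_le_one (fun j hj => hPnonneg j hj _ _) fun j hj => by
      rw [← hPsum j hj (restrict I s j)]
      exact Finset.single_le_sum (f := fun x => P j (restrict I s j) x)
        (fun x _ => hPnonneg j hj _ x) (Finset.mem_univ (s j))
  have hsum : ∀ s : ∀ j, S j, (∀ j ∈ D, Z j (restrict I s j) = s j) →
      (∑ j ∈ D, if Z j (restrict I s j) = s j then (1 : ℝ) else 0) = (D.card : ℝ) := by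
    intro s hs
    rw [Finset.sum_congr rfl (fun j hj => if_pos (hs j hj))]
    simp
  constructor
  · rintro ⟨h1, h2, h3⟩ s
    constructor
    · intro hs
      have h := h3 s
      rw [hsum s hs] at h
      linarith [(h1 s).2]
    · intro hs
      push Not at hs
      obtain ⟨j, hj, hne⟩ := hs
      have h := h2 j hj s
      rw [if_neg hne] at h
      exact le_antisymm h (h1 s).1
  · intro h
    refine ⟨fun s => ?_, fun j hj s => ?_, fun s => ?_⟩
    · by_cases hs : ∀ j ∈ D, Z j (restrict I s j) = s j
      · rw [(h s).1 hs]; exact ⟨hp0 s, le_rfl⟩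
      · rw [(h s).2 hs]; exact ⟨le_rfl, hp0 s⟩
    · by_cases hs : ∀ j ∈ D, Z j (restrict I s j) = s j
      · rw [(h s).1 hs, if_pos (hs j hj)]; exact hp1 s
      · rw [(h s).2 hs]; split_ifs <;> norm_num
    · by_cases hs : ∀ j ∈ D, Z j (restrict I s j) = s j
      · rw [(h s).1 hs, hsum s hs]; linarith
      · rw [(h s).2 hs]
        push Not at hs
        obtain ⟨j, hj, hne⟩ := hs
        have hle : (∑ i ∈ D.erase j, if Z i (restrict I s i) = s i then (1 : ℝ) else 0)
            ≤ ∑ i ∈ D.erase j, (1 : ℝ) :=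
          Finset.sum_le_sum fun i _ => by split_ifs <;> norm_num
        have hc : (∑ i ∈ D.erase j, (1 : ℝ)) + 1 = (D.card : ℝ) := by
          rw [Finset.sum_erase_add D (fun _ => (1 : ℝ)) hj]; simp
        rw [← Finset.sum_erase_add D _ hj, if_neg hne]
        linarith [hp1 s]
end

section
/- The lower-bounding constraint is unnecessary for nonnegative utilities: fix a strategy Z with induced binary variables z, and let U : S → ℝ satisfy U(s) ≥ 0 for all s ∈ S. Then for every π : S → ℝ satisfying 0 ≤ π(s) ≤ p(s) for all s ∈ S and π(s) ≤ z(s_j | s_{I(j)}) for all j ∈ D and all s ∈ S, one has ∑_{s∈S} π(s)U(s) ≤ ∑_{s∈S(Z)} p(s)U(s), and this upper bound is attained by the feasible choice π(s) = p(s) for s ∈ S(Z) and π(s) = 0 otherwise. -/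
/-!
STATEMENT 8: The lower-bounding constraint is unnecessary for nonnegative utilities:
fix a strategy Z with induced binary variables z, and let U : S → ℝ satisfy U(s) ≥ 0
for all s ∈ S. Then for every π : S → ℝ satisfying 0 ≤ π(s) ≤ p(s) for all s ∈ S and
π(s) ≤ z(s_j | s_{I(j)}) for all j ∈ D and all s ∈ S, one has
∑_{s∈S} π(s)U(s) ≤ ∑_{s∈S(Z)} p(s)U(s), and this upper bound is attained by the
feasible choice π(s) = p(s) for s ∈ S(Z) and π(s) = 0 otherwise.
-/

open Finset

attribute [local instance] Classical.propDecidable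

theorem lower_bound_constraint_unnecessary {n : ℕ}
    (S : Fin n → Type) [∀ j, Fintype (S j)] [∀ j, Nonempty (S j)]
    (C D : Finset (Fin n)) (hCD : Disjoint C D) (hCDunion : C ∪ D = Finset.univ)
    (I : Fin n → Finset (Fin n)) (hI : ∀ j, ∀ i ∈ I j, i < j)
    (P : ∀ j : Fin n, (∀ i : (I j), S i.1) → S j → ℝ)
    (hPnonneg : ∀ j ∈ C, ∀ (sI : ∀ i : (I j), S i.1) (sj : S j), 0 ≤ P j sI sj)
    (hPsum : ∀ j ∈ C, ∀ sI : ∀ i : (I j), S i.1, ∑ sj : S j, P j sI sj = 1)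
    (Z : ∀ j : Fin n, (∀ i : (I j), S i.1) → S j)
    (U : (∀ j, S j) → ℝ) (hU : ∀ s, 0 ≤ U s)
    (π : (∀ j, S j) → ℝ)
    (hπbounds : ∀ s : ∀ j, S j, 0 ≤ π s ∧ π s ≤ pathProb C I P s)
    (hπz : ∀ j ∈ D, ∀ s : ∀ j, S j,
      π s ≤ if Z j (restrict I s j) = s j then (1 : ℝ) else 0) :
    (∑ s : ∀ j, S j, π s * U s)
      ≤ (∑ s ∈ Finset.univ.filter
            (fun s : ∀ j, S j => ∀ j ∈ D, Z j (restrict I s j) = s j),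
          pathProb C I P s * U s)
    ∧ (let π₀ : (∀ j, S j) → ℝ := fun s =>
        if ∀ j ∈ D, Z j (restrict I s j) = s j then pathProb C I P s else 0
      (∀ s : ∀ j, S j, 0 ≤ π₀ s ∧ π₀ s ≤ pathProb C I P s) ∧
      (∀ j ∈ D, ∀ s : ∀ j, S j,
        π₀ s ≤ if Z j (restrict I s j) = s j then (1 : ℝ) else 0) ∧
      (∑ s : ∀ j, S j, π₀ s * U s)
        = ∑ s ∈ Finset.univ.filter
            (fun s : ∀ j, S j => ∀ j ∈ D, Z j (restrict I s j) = s j),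
          pathProb C I P s * U s) := by
  have hp0 : ∀ s, 0 ≤ pathProb C I P s := fun s =>
    Finset.prod_nonneg fun j hj => hPnonneg j hj _ _
  have hp1 : ∀ s, pathProb C I P s ≤ 1 := by
    intro s
    refine Finset.prod_le_one (fun j hj => hPnonneg j hj _ _) fun j hj => ?_
    rw [← hPsum j hj (restrict I s j)]
    exact Finset.single_le_sum (f := fun x => P j (restrict I s j) x)
      (fun x _ => hPnonneg j hj _ x) (Finset.mem_univ (s j))
  refine ⟨?_, ?_, ?_, ?_⟩
  · rw [Finset.sum_filter]
    refine Finset.sum_le_sum fun s _ => ?_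
    split_ifs with h
    · exact mul_le_mul_of_nonneg_right (hπbounds s).2 (hU s)
    · push Not at h
      obtain ⟨j, hj, hne⟩ := h
      have h1 := hπz j hj s
      rw [if_neg hne] at h1
      exact mul_nonpos_of_nonpos_of_nonneg h1 (hU s)
  · intro s
    dsimp only
    split_ifs
    · exact ⟨hp0 s, le_rfl⟩
    · exact ⟨le_rfl, hp0 s⟩
  · intro j hj s
    dsimp only
    by_cases h : ∀ j ∈ D, Z j (restrict I s j) = s j
    · rw [if_pos h, if_pos (h j hj)]
      exact hp1 s
    · rw [if_neg h]
      split_ifs <;> norm_num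
  · dsimp only
    rw [Finset.sum_filter]
    refine Finset.sum_congr rfl fun s _ => ?_
    split_ifs <;> simp
end

section
/- The probability cut forces correct path probabilities: fix a strategy Z with induced binary variables z. If π : S → ℝ satisfies 0 ≤ π(s) ≤ p(s) for all s ∈ S, π(s) ≤ z(s_j | s_{I(j)}) for all j ∈ D and all s ∈ S, and ∑_{s∈S} π(s) = 1, then π(s) = p(s) for every path s compatible with Z (and π(s) = 0 for every path not compatible with Z). -/
/-!
STATEMENT 9: The probability cut forces correct path probabilities: fix a strategy Z
with induced binary variables z. If π : S → ℝ satisfies 0 ≤ π(s) ≤ p(s) for all s ∈ S,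
π(s) ≤ z(s_j | s_{I(j)}) for all j ∈ D and all s ∈ S, and ∑_{s∈S} π(s) = 1, then
π(s) = p(s) for every path s compatible with Z (and π(s) = 0 for every path not
compatible with Z).
-/

open Finset

attribute [local instance] Classical.propDecidable

theorem aux_sum_prod_one : ∀ (n : ℕ) (S : Fin n → Type) [∀ j, Fintype (S j)]
    [∀ j, Nonempty (S j)] (F : ∀ _ : Fin n, (∀ i, S i) → ℝ)
    (_ : ∀ j s t, (∀ i, i ≤ j → s i = t i) → F j s = F j t)
    (_ : ∀ j s, ∑ x : S j, F j (Function.update s j x) = 1),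
    ∑ s : ∀ j, S j, ∏ j, F j s = 1 := by
  intro n
  induction n with
  | zero =>
    intro S _ _ F _ _
    simp
  | succ n ih =>
    intro S _ _ F hdep hsum
    have x0 : S (Fin.last n) := Classical.arbitrary _
    have hF : ∀ (t : ∀ i : Fin n, S i.castSucc) (x : S (Fin.last n)) (j : Fin n),
        F j.castSucc (Fin.snoc t x) = F j.castSucc (Fin.snoc t x0) := by
      intro t x j
      apply hdep
      intro i hi
      obtain ⟨k, rfl⟩ : ∃ k : Fin n, i = k.castSucc :=
        ⟨⟨i.1, lt_of_le_of_lt hi j.2⟩, rfl⟩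
      rw [Fin.snoc_castSucc, Fin.snoc_castSucc]
    have h1 := ih (fun i => S i.castSucc)
      (fun j t => F j.castSucc (Fin.snoc t x0))
      (by
        intro j s t h
        apply hdep
        intro i hi
        obtain ⟨k, rfl⟩ : ∃ k : Fin n, i = k.castSucc :=
          ⟨⟨i.1, lt_of_le_of_lt hi j.2⟩, rfl⟩
        rw [Fin.snoc_castSucc, Fin.snoc_castSucc]
        exact h k hi)
      (by
        intro j s
        have := hsum j.castSucc (Fin.snoc s x0)
        rw [← this]
        refine Finset.sum_congr rfl fun x _ => ?_
        congr 1
        convert Fin.snoc_update (α := S) (x := x0) (p := s) (i := j) (y := x) using 2)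
    rw [← (Fin.snocEquiv S).sum_comp, Fintype.sum_prod_type, Finset.sum_comm, ← h1]
    refine Finset.sum_congr rfl fun t _ => ?_
    have h2 := hsum (Fin.last n) (Fin.snoc t x0)
    simp only [Fin.prod_univ_castSucc]
    have h3 : ∀ x : S (Fin.last n), Function.update (Fin.snoc t x0 : ∀ i, S i) (Fin.last n) x
        = Fin.snoc t x := by
      intro x
      convert Fin.update_snoc_last (α := S) (x := x0) (p := t) (z := x) using 2
    simp only [h3] at h2
    calc _ = ∑ x : S (Fin.last n), (∏ j : Fin n, F j.castSucc (Fin.snoc t x0))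
              * F (Fin.last n) (Fin.snoc t x) := by
            refine Finset.sum_congr rfl fun x _ => ?_
            have : (Fin.snocEquiv S) (x, t) = Fin.snoc t x := rfl
            rw [this]
            simp only [hF t x]
      _ = _ := by rw [← Finset.mul_sum, h2, mul_one]

theorem probability_cut_forces_correct_probabilities {n : ℕ}
    (S : Fin n → Type) [∀ j, Fintype (S j)] [∀ j, Nonempty (S j)]
    (C D : Finset (Fin n)) (hCD : Disjoint C D) (hCDunion : C ∪ D = Finset.univ)
    (I : Fin n → Finset (Fin n)) (hI : ∀ j, ∀ i ∈ I j, i < j)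
    (P : ∀ j : Fin n, (∀ i : (I j), S i.1) → S j → ℝ)
    (hPnonneg : ∀ j ∈ C, ∀ (sI : ∀ i : (I j), S i.1) (sj : S j), 0 ≤ P j sI sj)
    (hPsum : ∀ j ∈ C, ∀ sI : ∀ i : (I j), S i.1, ∑ sj : S j, P j sI sj = 1)
    (Z : ∀ j : Fin n, (∀ i : (I j), S i.1) → S j)
    (π : (∀ j, S j) → ℝ)
    (hπbounds : ∀ s : ∀ j, S j, 0 ≤ π s ∧ π s ≤ pathProb C I P s)
    (hπz : ∀ j ∈ D, ∀ s : ∀ j, S j,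
      π s ≤ if Z j (restrict I s j) = s j then (1 : ℝ) else 0)
    (hπsum : ∑ s : ∀ j, S j, π s = 1) :
    ∀ s : ∀ j, S j,
      ((∀ j ∈ D, Z j (restrict I s j) = s j) → π s = pathProb C I P s) ∧
      (¬ (∀ j ∈ D, Z j (restrict I s j) = s j) → π s = 0) := by
  classical
  set q : (∀ j, S j) → ℝ := fun s =>
    if (∀ j ∈ D, Z j (restrict I s j) = s j) then pathProb C I P s else 0 with hq
  have hle : ∀ s, π s ≤ q s := by
    intro s
    simp only [hq]
    split_ifs with h
    · exact (hπbounds s).2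
    · push Not at h
      obtain ⟨j, hj, hne⟩ := h
      have := hπz j hj s
      rwa [if_neg hne] at this
  have hqsum : ∑ s, q s = 1 := by
    have key := aux_sum_prod_one n S
      (fun j s => if j ∈ C then P j (restrict I s j) (s j)
        else if Z j (restrict I s j) = s j then 1 else 0)
      (by
        intro j s t h
        have hr : restrict I s j = restrict I t j := by
          funext i
          exact h i.1 (hI j i.1 i.2).le
        simp only [hr, h j le_rfl])
      (by
        intro j s
        have hr : ∀ x, restrict I (Function.update s j x) j = restrict I s j := by
          intro x
          funext i
          exact Function.update_of_ne (hI j i.1 i.2).ne _ _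
        simp only [hr, Function.update_self]
        split_ifs with h
        · exact hPsum j h _
        · simp)
    rw [← key]
    refine Finset.sum_congr rfl fun s _ => ?_
    have hD : ∀ j, j ∈ D ↔ j ∉ C := by
      intro j
      have h1 : j ∈ C ∪ D := by rw [hCDunion]; exact Finset.mem_univ j
      have h2 : j ∈ C → j ∉ D := fun h => Finset.disjoint_left.mp hCD h
      rw [Finset.mem_union] at h1
      tauto
    simp only [hq]
    split_ifs with h
    · unfold pathProb
      symm
      rw [← Finset.prod_subset (Finset.subset_univ C)]
      · exact Finset.prod_congr rfl fun j hj => if_pos hj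
      · intro j _ hj
        rw [if_neg hj, if_pos (h j ((hD j).2 hj))]
    · push Not at h
      obtain ⟨j, hj, hne⟩ := h
      symm
      apply Finset.prod_eq_zero (Finset.mem_univ j)
      rw [if_neg ((hD j).1 hj), if_neg hne]
  have heq : ∀ s, π s = q s := by
    have := (Finset.sum_eq_sum_iff_of_le (s := Finset.univ) (fun s _ => hle s)).1
      (by rw [hqsum]; exact hπsum)
    exact fun s => this s (Finset.mem_univ s)
  intro s
  refine ⟨fun h => ?_, fun h => ?_⟩
  · rw [heq s]; exact if_pos h
  · rw [heq s]; exact if_neg h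
end

section
/- Feasibility of the indicator solution in the improved formulation: let S* ⊆ S be a subset of paths containing every path s with p(s) > 0. Fix a strategy Z, let z be its induced binary variables, and define x : S* → ℝ by x(s) = 1 if s is compatible with Z and x(s) = 0 otherwise. Then (i) ∑_{s_j∈S_j} z(s_j | s_{I(j)}) = 1 for every j ∈ D and s_{I(j)} ∈ S_{I(j)}; (ii) ∑_{s ∈ S* ∩ S_{s_j|s_{I(j)}}} x(s) ≤ Γ(s_j|s_{I(j)}) · z(s_j | s_{I(j)}) for every j ∈ D, s_j ∈ S_j, s_{I(j)} ∈ S_{I(j)}, where Γ(s_j|s_{I(j)}) = min{ |S* ∩ S_{s_j|s_{I(j)}}|, ∏_{k ∈ C \ ({j} ∪ I(j))} |S_k| }; (iii) ∑_{s∈S*} p(s)x(s) = 1; and (iv) 0 ≤ x(s) ≤ 1 for all s ∈ S*. -/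
/-!
STATEMENT 10: Feasibility of the indicator solution in the improved formulation:
let S* ⊆ S be a subset of paths containing every path s with p(s) > 0. Fix a strategy
Z, let z be its induced binary variables, and define x : S* → ℝ by x(s) = 1 if s is
compatible with Z and x(s) = 0 otherwise. Then
(i) ∑_{s_j∈S_j} z(s_j | s_{I(j)}) = 1 for every j ∈ D and s_{I(j)} ∈ S_{I(j)};
(ii) ∑_{s ∈ S* ∩ S_{s_j|s_{I(j)}}} x(s) ≤ Γ(s_j|s_{I(j)}) · z(s_j | s_{I(j)}) for
every j ∈ D, s_j ∈ S_j, s_{I(j)} ∈ S_{I(j)}, where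
Γ(s_j|s_{I(j)}) = min{ |S* ∩ S_{s_j|s_{I(j)}}|, ∏_{k ∈ C \ ({j} ∪ I(j))} |S_k| };
(iii) ∑_{s∈S*} p(s)x(s) = 1; and (iv) 0 ≤ x(s) ≤ 1 for all s ∈ S*.
-/

open Finset

attribute [local instance] Classical.propDecidable

theorem sum_update_aux {n : ℕ} {S : Fin n → Type} [∀ j, Fintype (S j)] (k : Fin n)
    (g : (∀ j, S j) → ℝ) :
    ∑ s : ∀ j, S j, ∑ a : S k, g (Function.update s k a)
      = (∑ s : ∀ j, S j, g s) * (Fintype.card (S k) : ℝ) := by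
  let e : ((∀ j, S j) × S k) ≃ ((∀ j, S j) × S k) :=
    { toFun := fun q => (Function.update q.1 k q.2, q.1 k)
      invFun := fun q => (Function.update q.1 k q.2, q.1 k)
      left_inv := by rintro ⟨s, a⟩; simp
      right_inv := by rintro ⟨s, a⟩; simp }
  have h := Equiv.sum_comp e (fun q => g q.1)
  rw [Fintype.sum_prod_type, Fintype.sum_prod_type] at h
  simp only [e, Equiv.coe_fn_mk] at h
  rw [h]
  simp only [Finset.sum_const, Finset.card_univ, nsmul_eq_mul]
  rw [Finset.sum_mul]
  exact Finset.sum_congr rfl fun s _ => mul_comm _ _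

theorem sum_prod_aux {n : ℕ} (S : Fin n → Type) [∀ j, Fintype (S j)] [∀ j, Nonempty (S j)]
    (I : Fin n → Finset (Fin n)) (hI : ∀ j, ∀ i ∈ I j, i < j)
    (Q : ∀ j : Fin n, (∀ i : (I j), S i.1) → S j → ℝ)
    (hQ : ∀ j, ∀ sI : ∀ i : (I j), S i.1, ∑ sj : S j, Q j sI sj = 1) :
    ∑ s : ∀ j, S j, ∏ j, Q j (restrict I s j) (s j) = 1 := by
  have key : ∀ T : Finset (Fin n),
      (∑ s : ∀ j, S j, ∏ j ∈ T, Q j (restrict I s j) (s j)) * ∏ j ∈ T, (Fintype.card (S j) : ℝ)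
        = ∏ j, (Fintype.card (S j) : ℝ) := by
    intro T
    induction T using Finset.induction_on_max with
    | empty => simp [Fintype.card_pi]
    | insert a T hT ih =>
      have ha : a ∉ T := fun h => lt_irrefl _ (hT a h)
      rw [← ih, Finset.prod_insert ha, ← mul_assoc, ← sum_update_aux]
      congr 1
      refine Finset.sum_congr rfl fun s _ => ?_
      have hr : ∀ (b : S a) (j : Fin n), j ≤ a →
          restrict I (Function.update s a b) j = restrict I s j := by
        intro b j hj
        funext i
        have : i.1 ≠ a := ne_of_lt (lt_of_lt_of_le (hI j i.1 i.2) hj)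
        simp [_root_.restrict, this]
      have hstep : ∀ b : S a, ∏ j ∈ insert a T,
          Q j (restrict I (Function.update s a b) j) (Function.update s a b j)
          = Q a (restrict I s a) b * ∏ j ∈ T, Q j (restrict I s j) (s j) := by
        intro b
        rw [Finset.prod_insert ha, hr b a le_rfl, Function.update_self]
        congr 1
        refine Finset.prod_congr rfl fun j hj => ?_
        rw [hr b j (hT j hj).le, Function.update_of_ne (hT j hj).ne]
      simp only [hstep]
      rw [← Finset.sum_mul, hQ, one_mul]
  have h := key Finset.univ
  have hne : (∏ j, (Fintype.card (S j) : ℝ)) ≠ 0 :=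
    Finset.prod_ne_zero_iff.2 fun j _ => by exact_mod_cast Fintype.card_ne_zero
  exact mul_right_cancel₀ hne (h.trans (one_mul _).symm)

theorem indicator_solution_feasible {n : ℕ}
    (S : Fin n → Type) [∀ j, Fintype (S j)] [∀ j, Nonempty (S j)]
    (C D : Finset (Fin n)) (hCD : Disjoint C D) (hCDunion : C ∪ D = Finset.univ)
    (I : Fin n → Finset (Fin n)) (hI : ∀ j, ∀ i ∈ I j, i < j)
    (P : ∀ j : Fin n, (∀ i : (I j), S i.1) → S j → ℝ)
    (hPnonneg : ∀ j ∈ C, ∀ (sI : ∀ i : (I j), S i.1) (sj : S j), 0 ≤ P j sI sj)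
    (hPsum : ∀ j ∈ C, ∀ sI : ∀ i : (I j), S i.1, ∑ sj : S j, P j sI sj = 1)
    (Sstar : Finset (∀ j, S j))
    (hSstar : ∀ s : ∀ j, S j, 0 < pathProb C I P s → s ∈ Sstar)
    (Z : ∀ j : Fin n, (∀ i : (I j), S i.1) → S j) :
    let x : (∀ j, S j) → ℝ := fun s =>
      if ∀ j ∈ D, Z j (restrict I s j) = s j then 1 else 0
    (∀ j ∈ D, ∀ sI : ∀ i : (I j), S i.1,
        ∑ sj : S j, (if Z j sI = sj then (1 : ℝ) else 0) = 1) ∧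
    (∀ j ∈ D, ∀ (sj : S j) (sI : ∀ i : (I j), S i.1),
        (∑ s ∈ Sstar.filter
            (fun s : ∀ k, S k => s j = sj ∧ restrict I s j = sI), x s)
          ≤ ((min
                (Sstar.filter
                  (fun s : ∀ k, S k => s j = sj ∧ restrict I s j = sI)).card
                (∏ k ∈ C \ insert j (I j), Fintype.card (S k)) : ℕ) : ℝ)
            * (if Z j sI = sj then (1 : ℝ) else 0)) ∧
    (∑ s ∈ Sstar, pathProb C I P s * x s = 1) ∧
    (∀ s ∈ Sstar, 0 ≤ x s ∧ x s ≤ 1) := by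
  intro x
  have hx01 : ∀ s, 0 ≤ x s ∧ x s ≤ 1 := by
    intro s
    simp only [x]
    split_ifs <;> norm_num
  have hmem : ∀ j, j ∉ C → j ∈ D := by
    intro j hj
    have : j ∈ C ∪ D := by rw [hCDunion]; exact Finset.mem_univ j
    exact (Finset.mem_union.1 this).resolve_left hj
  refine ⟨?_, ?_, ?_, fun s _ => hx01 s⟩
  · intro j _ sI
    simp
  · intro j hj sj sI
    by_cases hz : Z j sI = sj
    · rw [if_pos hz, mul_one, Nat.cast_min]
      refine le_min ?_ ?_
      · refine (Finset.sum_le_card_nsmul _ _ 1 fun s _ => (hx01 s).2).trans ?_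
        simp
      · simp only [x]
        rw [Finset.sum_ite, Finset.sum_const_zero, add_zero, Finset.sum_const, nsmul_eq_mul,
          mul_one, Nat.cast_le]
        have hc : ∏ k ∈ C \ insert j (I j), Fintype.card (S k)
            = Fintype.card (∀ k : {k // k ∈ C \ insert j (I j)}, S k.1) := by
          rw [Fintype.card_pi]
          exact (Finset.prod_coe_sort _ (fun k => Fintype.card (S k))).symm
        rw [hc, ← Finset.card_univ]
        refine Finset.card_le_card_of_injOn (fun s k => s k.1)
          (fun _ _ => Finset.mem_coe.2 (Finset.mem_univ _)) ?_
        intro s hs t ht hst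
        simp only [Finset.coe_filter, Finset.mem_filter, Set.mem_ofPred_eq] at hs ht
        obtain ⟨⟨_, hs1, hs2⟩, hs3⟩ := hs
        obtain ⟨⟨_, ht1, ht2⟩, ht3⟩ := ht
        have main : ∀ m : ℕ, ∀ k : Fin n, k.1 = m → s k = t k := by
          intro m
          induction m using Nat.strong_induction_on with
          | _ m ih =>
            intro k hk
            by_cases hkj : k = j
            · subst hkj; rw [hs1, ht1]
            by_cases hkI : k ∈ I j
            · exact congrFun (hs2.trans ht2.symm) ⟨k, hkI⟩
            by_cases hkC : k ∈ C
            · exact congrFun hst ⟨k, by simp [hkC, hkj, hkI]⟩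
            · rw [← hs3 k (hmem k hkC), ← ht3 k (hmem k hkC)]
              congr 1
              funext i
              exact ih i.1.1 (hk ▸ hI k i.1 i.2) i.1 rfl
        funext k
        exact main k.1 k rfl
    · rw [if_neg hz, mul_zero]
      refine le_of_eq (Finset.sum_eq_zero fun s hs => ?_)
      obtain ⟨_, h1, h2⟩ := Finset.mem_filter.1 hs
      refine if_neg fun h => hz ?_
      rw [← h1, ← h2]
      exact h j hj
  · have hp0 : ∀ s, 0 ≤ pathProb C I P s := fun s =>
      Finset.prod_nonneg fun j hj => hPnonneg j hj _ _
    rw [Finset.sum_subset (Finset.subset_univ Sstar) (fun s _ hs => by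
      have : pathProb C I P s = 0 :=
        le_antisymm (not_lt.1 fun h => hs (hSstar s h)) (hp0 s)
      rw [this, zero_mul])]
    rw [← sum_prod_aux S I hI
      (fun j sI sj => if j ∈ C then P j sI sj else if Z j sI = sj then 1 else 0)
      (fun j sI => by
        by_cases hj : j ∈ C
        · simp only [if_pos hj]; exact hPsum j hj sI
        · simp [hj])]
    refine Finset.sum_congr rfl fun s _ => ?_
    have hcompl : (Finset.univ : Finset (Fin n)) = C ∪ D := by rw [hCDunion]
    rw [hcompl, Finset.prod_union hCD]
    congr 1
    · exact Finset.prod_congr rfl fun j hj => (if_pos hj).symm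
    · rw [Finset.prod_congr rfl (g := fun j => if Z j (restrict I s j) = s j then (1:ℝ) else 0)
        fun j hj => if_neg fun h => Finset.disjoint_left.1 hCD h hj]
      by_cases h : ∀ j ∈ D, Z j (restrict I s j) = s j
      · rw [Finset.prod_eq_one fun j hj => if_pos (h j hj)]
        exact if_pos h
      · have hx : x s = 0 := if_neg h
        rw [hx]
        push Not at h
        obtain ⟨j, hj, hne⟩ := h
        exact (Finset.prod_eq_zero hj (if_neg hne)).symm
end

section
/- Feasible solutions of the improved formulation recover the strategy's expected utility: let S* ⊆ S contain every path s with p(s) > 0. Fix a strategy Z with induced binary variables z, and suppose x : S* → ℝ satisfies 0 ≤ x(s) ≤ 1 for all s ∈ S*, ∑_{s ∈ S* ∩ S_{s_j|s_{I(j)}}} x(s) ≤ Γ(s_j|s_{I(j)}) · z(s_j | s_{I(j)}) for every j ∈ D, s_j ∈ S_j, s_{I(j)} ∈ S_{I(j)} (with Γ(s_j|s_{I(j)}) = min{ |S* ∩ S_{s_j|s_{I(j)}}|, ∏_{k ∈ C \ ({j} ∪ I(j))} |S_k| }), and ∑_{s∈S*} p(s)x(s) = 1. Then x(s) = 0 for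 every s ∈ S* that is not compatible with Z, x(s) = 1 for every s ∈ S* compatible with Z with p(s) > 0, and consequently ∑_{s∈S*} p(s)x(s)U(s) = ∑_{s∈S(Z)} p(s)U(s) for any utility function U : S → ℝ. -/
/-!
STATEMENT 11: Feasible solutions of the improved formulation recover the strategy's
expected utility: let S* ⊆ S contain every path s with p(s) > 0. Fix a strategy Z with
induced binary variables z, and suppose x : S* → ℝ satisfies 0 ≤ x(s) ≤ 1 for all
s ∈ S*, ∑_{s ∈ S* ∩ S_{s_j|s_{I(j)}}} x(s) ≤ Γ(s_j|s_{I(j)}) · z(s_j | s_{I(j)}) for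
every j ∈ D, s_j ∈ S_j, s_{I(j)} ∈ S_{I(j)} (with
Γ(s_j|s_{I(j)}) = min{ |S* ∩ S_{s_j|s_{I(j)}}|, ∏_{k ∈ C \ ({j} ∪ I(j))} |S_k| }),
and ∑_{s∈S*} p(s)x(s) = 1. Then x(s) = 0 for every s ∈ S* that is not compatible with
Z, x(s) = 1 for every s ∈ S* compatible with Z with p(s) > 0, and consequently
∑_{s∈S*} p(s)x(s)U(s) = ∑_{s∈S(Z)} p(s)U(s) for any utility function U : S → ℝ.
-/

open Finset

attribute [local instance] Classical.propDecidable

theorem aux_sum_one : ∀ (n : ℕ) (S : Fin n → Type) [∀ j, Fintype (S j)] [∀ j, Nonempty (S j)]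
    (q : Fin n → (∀ k, S k) → ℝ)
    (_ : ∀ j s s', (∀ k, k ≤ j → s k = s' k) → q j s = q j s')
    (_ : ∀ j s, ∑ a : S j, q j (Function.update s j a) = 1),
    ∑ s : (∀ k, S k), ∏ j, q j s = 1 := by
  intro n
  induction n with
  | zero =>
    intro S _ _ q _ _
    simp
  | succ n ih =>
    intro S _ _ q hdep hsum
    rw [← Equiv.sum_comp (Fin.consEquiv S), Fintype.sum_prod_type]
    have s0 : ∀ k, S k := fun k => Classical.arbitrary _
    rw [← hsum 0 s0]
    refine Finset.sum_congr rfl fun a _ => ?_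
    have h1 : ∀ t : (∀ k : Fin n, S k.succ), ∏ j, q j (Fin.consEquiv S (a, t))
        = q 0 (Function.update s0 0 a) *
          ∏ j : Fin n, q j.succ (Fin.cons (α := S) a t) := by
      intro t
      rw [Fin.prod_univ_succ]
      congr 1
      apply hdep
      intro k hk
      have hk0 : k = 0 := by simpa using hk
      subst hk0
      simp [Fin.consEquiv]
    rw [Finset.sum_congr rfl fun t _ => h1 t, ← Finset.mul_sum]
    have := ih (fun k => S k.succ) (fun j t => q j.succ (Fin.cons (α := S) a t)) ?_ ?_
    · rw [this, mul_one]
    · intro j s s' h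
      apply hdep
      intro k hk
      induction k using Fin.cases with
      | zero => simp
      | succ k => simpa using h k (by simpa using hk)
    · intro j s
      rw [← hsum j.succ (Fin.cons (α := S) a s)]
      refine Finset.sum_congr rfl fun b _ => ?_
      apply hdep
      intro k _
      induction k using Fin.cases with
      | zero =>
        rw [Function.update_of_ne (Fin.succ_ne_zero j).symm]; simp
      | succ k =>
        by_cases hkj : k = j
        · subst hkj; simp
        · rw [Function.update_of_ne (by simpa using hkj)]
          simp [Function.update_of_ne hkj]

theorem aux_compat {n : ℕ}
    (S : Fin n → Type) [∀ j, Fintype (S j)] [∀ j, Nonempty (S j)]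
    (C D : Finset (Fin n)) (hCD : Disjoint C D) (hCDunion : C ∪ D = Finset.univ)
    (I : Fin n → Finset (Fin n)) (hI : ∀ j, ∀ i ∈ I j, i < j)
    (P : ∀ j : Fin n, (∀ i : (I j), S i.1) → S j → ℝ)
    (hPsum : ∀ j ∈ C, ∀ sI : ∀ i : (I j), S i.1, ∑ sj : S j, P j sI sj = 1)
    (Z : ∀ j : Fin n, (∀ i : (I j), S i.1) → S j) :
    ∑ s ∈ Finset.univ.filter
          (fun s : ∀ j, S j => ∀ j ∈ D, Z j (restrict I s j) = s j),
        pathProb C I P s = 1 := by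
  have key := aux_sum_one n S (fun j s => if j ∈ C then P j (restrict I s j) (s j)
      else if Z j (restrict I s j) = s j then 1 else 0) ?_ ?_
  · rw [← key, Finset.sum_filter]
    refine Finset.sum_congr rfl fun s _ => ?_
    have hD : (∏ j ∈ D, if Z j (restrict I s j) = s j then (1:ℝ) else 0)
        = if (∀ j ∈ D, Z j (restrict I s j) = s j) then 1 else 0 := by
      split_ifs with h
      · exact Finset.prod_eq_one fun j hj => by simp [h j hj]
      · push Not at h
        obtain ⟨j, hj, hne⟩ := h
        exact Finset.prod_eq_zero hj (by simp [hne])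
    have e : (Finset.univ : Finset (Fin n)) = C ∪ D := hCDunion.symm
    have e2 : ∀ f : Fin n → ℝ, ∏ j, f j = (∏ j ∈ C, f j) * ∏ j ∈ D, f j := by
      intro f
      rw [e]
      convert Finset.prod_union hCD
    rw [e2]
    have a1 : (∏ j ∈ C, if j ∈ C then P j (restrict I s j) (s j)
      else if Z j (restrict I s j) = s j then 1 else 0) = pathProb C I P s :=
      Finset.prod_congr rfl fun j hj => by simp [hj]
    have a2 : (∏ j ∈ D, if j ∈ C then P j (restrict I s j) (s j)
      else if Z j (restrict I s j) = s j then 1 else 0) =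
      ∏ j ∈ D, if Z j (restrict I s j) = s j then (1:ℝ) else 0 :=
      Finset.prod_congr rfl fun j hj => by
        simp [Finset.disjoint_right.mp hCD hj]
    rw [a1, a2, hD]
    split_ifs <;> simp
  · intro j s s' h
    have h1 : restrict I s j = restrict I s' j := by
      funext i
      exact h _ (hI j _ i.2).le
    simp only [h1, h j le_rfl]
  · intro j s
    have h1 : ∀ a, restrict I (Function.update s j a) j = restrict I s j := by
      intro a
      funext i
      exact Function.update_of_ne (hI j _ i.2).ne _ _
    simp only [h1, Function.update_self]
    by_cases hj : j ∈ C
    · simp only [hj, if_true, hPsum j hj]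
    · simp [hj]

theorem feasible_solution_recovers_expected_utility {n : ℕ}
    (S : Fin n → Type) [∀ j, Fintype (S j)] [∀ j, Nonempty (S j)]
    (C D : Finset (Fin n)) (hCD : Disjoint C D) (hCDunion : C ∪ D = Finset.univ)
    (I : Fin n → Finset (Fin n)) (hI : ∀ j, ∀ i ∈ I j, i < j)
    (P : ∀ j : Fin n, (∀ i : (I j), S i.1) → S j → ℝ)
    (hPnonneg : ∀ j ∈ C, ∀ (sI : ∀ i : (I j), S i.1) (sj : S j), 0 ≤ P j sI sj)
    (hPsum : ∀ j ∈ C, ∀ sI : ∀ i : (I j), S i.1, ∑ sj : S j, P j sI sj = 1)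
    (Sstar : Finset (∀ j, S j))
    (hSstar : ∀ s : ∀ j, S j, 0 < pathProb C I P s → s ∈ Sstar)
    (Z : ∀ j : Fin n, (∀ i : (I j), S i.1) → S j)
    (U : (∀ j, S j) → ℝ)
    (x : (∀ j, S j) → ℝ)
    (hxbounds : ∀ s ∈ Sstar, 0 ≤ x s ∧ x s ≤ 1)
    (hxgamma : ∀ j ∈ D, ∀ (sj : S j) (sI : ∀ i : (I j), S i.1),
      (∑ s ∈ Sstar.filter
          (fun s : ∀ k, S k => s j = sj ∧ restrict I s j = sI), x s)
        ≤ ((min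
              (Sstar.filter
                (fun s : ∀ k, S k => s j = sj ∧ restrict I s j = sI)).card
              (∏ k ∈ C \ insert j (I j), Fintype.card (S k)) : ℕ) : ℝ)
          * (if Z j sI = sj then (1 : ℝ) else 0))
    (hxsum : ∑ s ∈ Sstar, pathProb C I P s * x s = 1) :
    (∀ s ∈ Sstar, ¬ (∀ j ∈ D, Z j (restrict I s j) = s j) → x s = 0) ∧
    (∀ s ∈ Sstar, (∀ j ∈ D, Z j (restrict I s j) = s j) →
        0 < pathProb C I P s → x s = 1) ∧
    (∑ s ∈ Sstar, pathProb C I P s * x s * U s)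
      = ∑ s ∈ Finset.univ.filter
          (fun s : ∀ j, S j => ∀ j ∈ D, Z j (restrict I s j) = s j),
        pathProb C I P s * U s := by
  have hp : ∀ s, 0 ≤ pathProb C I P s := fun s =>
    Finset.prod_nonneg fun j hj => hPnonneg j hj _ _
  have hmem : ∀ s, s ∉ Sstar → pathProb C I P s = 0 := fun s hs =>
    le_antisymm (not_lt.mp fun h => hs (hSstar s h)) (hp s)
  have h0 : ∀ s ∈ Sstar, ¬ (∀ j ∈ D, Z j (restrict I s j) = s j) → x s = 0 := by
    intro s hs hn
    push Not at hn
    obtain ⟨j, hj, hne⟩ := hn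
    have h := hxgamma j hj (s j) (restrict I s j)
    rw [if_neg hne, mul_zero] at h
    have h2 := Finset.single_le_sum (f := x) (s := Sstar.filter
          (fun t : ∀ k, S k => t j = s j ∧ restrict I t j = restrict I s j))
      (fun t ht => (hxbounds t (Finset.mem_filter.mp ht).1).1)
      (Finset.mem_filter.mpr ⟨hs, rfl, rfl⟩)
    exact le_antisymm (h2.trans h) (hxbounds s hs).1
  have hc := aux_compat S C D hCD hCDunion I hI P hPsum Z
  have conv : ∀ f : (∀ j, S j) → ℝ, ∑ s ∈ Sstar, pathProb C I P s * x s * f s =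
      ∑ s ∈ Finset.univ.filter
          (fun s : ∀ j, S j => ∀ j ∈ D, Z j (restrict I s j) = s j),
        pathProb C I P s * x s * f s := by
    intro f
    rw [← Finset.sum_subset (Finset.subset_univ Sstar |> fun _ => Finset.filter_subset
      (fun s : ∀ j, S j => ∀ j ∈ D, Z j (restrict I s j) = s j) Sstar)]
    · apply Finset.sum_subset
      · exact Finset.filter_subset_filter _ (Finset.subset_univ _)
      · intro s h1 h2
        have : s ∉ Sstar := fun h => h2 (Finset.mem_filter.mpr ⟨h, (Finset.mem_filter.mp h1).2⟩)
        simp [hmem s this]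
    · intro s hs hn
      rw [h0 s hs (fun h => hn (Finset.mem_filter.mpr ⟨hs, h⟩))]
      simp
  have hle : ∀ s, pathProb C I P s * x s ≤ pathProb C I P s := by
    intro s
    by_cases hs : s ∈ Sstar
    · exact mul_le_of_le_one_right (hp s) (hxbounds s hs).2
    · simp [hmem s hs]
  have heq : ∀ s ∈ Finset.univ.filter
          (fun s : ∀ j, S j => ∀ j ∈ D, Z j (restrict I s j) = s j),
        pathProb C I P s * x s = pathProb C I P s := by
    apply (Finset.sum_eq_sum_iff_of_le fun s _ => hle s).mp
    have := conv (fun _ => 1)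
    simp only [mul_one] at this
    rw [hc, ← this, hxsum]
  refine ⟨h0, ?_, ?_⟩
  · intro s _ hcs hpos
    have := heq s (Finset.mem_filter.mpr ⟨Finset.mem_univ _, hcs⟩)
    exact (mul_eq_left₀ hpos.ne').mp this
  · rw [conv U]
    exact Finset.sum_congr rfl fun s hs => by rw [heq s hs]
end
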